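/- arXiv:2510.04993 — 2 statements merged into one kernel-verified Lean document; each statement's English description precedes it below -/
import Mathlib

section
/- Let n ≥ 1 and let π be a permutation gate on n qubits that lies in 𝒞₃. Then there exist Clifford permutation gates φ₁ and φ₂ and a permutation gate μ in staircase form with μ ∈ 𝒞₃ such that π = φ₁ μ φ₂. -/
/-! Common framework: qubit gates, the Pauli group, the Clifford hierarchy,
permutation gates, Toffoli gates and staircase form, descending multiplications,
multilinear polynomial representations. -/

/-- Vectors in `𝔽₂ⁿ`, indexing computational basis states. -/
abbrev QV (n : ℕ) := Fin n → ZMod 2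

/-- `n`-qubit gates: `2ⁿ × 2ⁿ` complex matrices indexed by `𝔽₂ⁿ`. -/
abbrev QMat (n : ℕ) := Matrix (QV n) (QV n) ℂ

/-- Standard basis vector `eᵢ` of `𝔽₂ⁿ`. -/
def stdBasis (n : ℕ) (i : Fin n) : QV n := fun m => if m = i then 1 else 0

/-- The gate `X^u Z^z`, sending `|b⟩` to `(-1)^(z·b) |b+u⟩`. -/
noncomputable def XZGate (n : ℕ) (u z : QV n) : QMat n :=
  fun a b => if a = b + u then (-1 : ℂ) ^ (∑ i, (z i).val * (b i).val) else 0

/-- The Pauli group on `n` qubits: gates `c·P₁⊗⋯⊗Pₙ`, `c ∈ {±1, ±i}`,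
`Pᵢ ∈ {I,X,Y,Z}`, equivalently phases times `X^u Z^z`. -/
def PauliGroup (n : ℕ) : Set (QMat n) :=
  { P | ∃ (c : ℂ) (u z : QV n),
      (c = 1 ∨ c = -1 ∨ c = Complex.I ∨ c = -Complex.I) ∧ P = c • XZGate n u z }

/-- Level `k` of the Clifford hierarchy `𝒞ₖ` (level 1 is the Pauli group,
level 2 the Clifford group; level 0 is junk/empty). -/
def CliffordLevel (n : ℕ) : ℕ → Set (QMat n)
  | 0 => ∅
  | 1 => PauliGroup n
  | (k+2) => { U | U ∈ Matrix.unitaryGroup (QV n) ℂ ∧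
      ∀ P ∈ PauliGroup n, U * P * star U ∈ CliffordLevel n (k+1) }

/-- The permutation gate of a permutation `f` of `𝔽₂ⁿ`: sends `|v⟩` to `|f v⟩`. -/
noncomputable def permGate (n : ℕ) (f : QV n ≃ QV n) : QMat n :=
  fun a b => if a = f b then 1 else 0

/-- A diagonal gate. -/
def IsDiagonal (n : ℕ) (d : QMat n) : Prop := ∀ a b : QV n, a ≠ b → d a b = 0

/-- A gate is semi-Clifford if it equals `φ₁ d φ₂` for Clifford `φ₁, φ₂` and diagonal `d`. -/
def IsSemiClifford (n : ℕ) (U : QMat n) : Prop :=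
  ∃ φ₁ d φ₂ : QMat n, φ₁ ∈ CliffordLevel n 2 ∧ φ₂ ∈ CliffordLevel n 2 ∧
    IsDiagonal n d ∧ U = φ₁ * d * φ₂

/-- The underlying map of the Toffoli gate `TOF_{i,j,k}`: `v ↦ v + (vᵢvⱼ)·eₖ`. -/
def tofFun (n : ℕ) (i j k : Fin n) (v : QV n) : QV n :=
  fun m => if m = k then v m + v i * v j else v m

/-- A map on `𝔽₂ⁿ` is in staircase form if it is a product (applied left-to-right)
of pairwise distinct Toffoli gates `TOF_{i,j,k}` with `i<j<k` and with targets
nondecreasing in the order the gates are applied. -/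
def IsStaircase (n : ℕ) (g : QV n → QV n) : Prop :=
  ∃ L : List (Fin n × Fin n × Fin n),
    L.Nodup ∧
    (∀ t ∈ L, t.1 < t.2.1 ∧ t.2.1 < t.2.2) ∧
    List.Chain' (fun s t => s.2.2 ≤ t.2.2) L ∧
    g = fun v => L.foldl (fun w t => tofFun n t.1 t.2.1 t.2.2 w) v

/-- A descending multiplication on `𝔽₂ⁿ`: bilinear, associative, commutative,
`eᵢeᵢ = 0`, and for `i < j`, `eᵢeⱼ ∈ span{eₖ : k > j}`. -/
def IsDescendingMul (n : ℕ) (mul : QV n → QV n → QV n) : Prop :=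
  (∀ u v w : QV n, mul (u + v) w = mul u w + mul v w) ∧
  (∀ u v w : QV n, mul u (v + w) = mul u v + mul u w) ∧
  (∀ u v w : QV n, mul (mul u v) w = mul u (mul v w)) ∧
  (∀ u v : QV n, mul u v = mul v u) ∧
  (∀ i : Fin n, mul (stdBasis n i) (stdBasis n i) = 0) ∧
  (∀ i j : Fin n, i < j → ∀ m : Fin n, m ≤ j → mul (stdBasis n i) (stdBasis n j) m = 0)

/-- The product `∏_{i ∈ l} eᵢ` under a multiplication, for a list `l` (junk `0` on `[]`). -/
def dmProdList (n : ℕ) (mul : QV n → QV n → QV n) : List (Fin n) → QV n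
  | [] => 0
  | [i] => stdBasis n i
  | i :: j :: rest => mul (stdBasis n i) (dmProdList n mul (j :: rest))

/-- The product `∏_{i ∈ T} eᵢ` under a multiplication. -/
def dmProd (n : ℕ) (mul : QV n → QV n → QV n) (T : Finset (Fin n)) : QV n :=
  dmProdList n mul (T.sort (· ≤ ·))

/-- `g` is the map `∑_{i∈S} eᵢ ↦ ∑_{∅≠T⊆S} ∏_{i∈T} eᵢ` associated to a multiplication. -/
def dmPiSpec (n : ℕ) (mul : QV n → QV n → QV n) (g : QV n → QV n) : Prop :=
  ∀ S : Finset (Fin n),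
    g (∑ i ∈ S, stdBasis n i) = ∑ T ∈ S.powerset.erase ∅, dmProd n mul T

/-- The bilinear extension of `eᵢeⱼ := g(eᵢ+eⱼ) + eᵢ + eⱼ`. -/
def inducedMul (n : ℕ) (g : QV n → QV n) (u v : QV n) : QV n :=
  ∑ i : Fin n, ∑ j : Fin n,
    (u i * v j) • (g (stdBasis n i + stdBasis n j) + stdBasis n i + stdBasis n j)

/-- Coefficient of the monomial `∏_{i∈T} aᵢ` in the unique multilinear polynomial
over `𝔽₂` representing `g : 𝔽₂ⁿ → 𝔽₂` (Möbius inversion over `𝔽₂`). -/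
def mlCoeff (n : ℕ) (g : QV n → ZMod 2) (T : Finset (Fin n)) : ZMod 2 :=
  ∑ R ∈ T.powerset, g (∑ i ∈ R, stdBasis n i)

/-- Strictly lower triangular matrix. -/
def StrictLowerTri (n : ℕ) (A : Matrix (Fin n) (Fin n) (ZMod 2)) : Prop :=
  ∀ p q : Fin n, p ≤ q → A p q = 0

/-- Multiplication of basis vectors for the gate `U_k`: the basis of `𝔽₂^(2^k-1)` is
indexed by nonempty subsets `S ⊆ [k]`, encoded as indices `a` via the binary digits of
`a+1`; `e_S e_T = e_{S∪T}` if `S ∩ T = ∅` and `e_S e_T = 0` otherwise. -/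
def ukBasisMul (k : ℕ) (a b : Fin (2 ^ k - 1)) : QV (2 ^ k - 1) :=
  if (a.val + 1) &&& (b.val + 1) = 0 then
    (if h : a.val + b.val + 1 < 2 ^ k - 1 then stdBasis (2 ^ k - 1) ⟨a.val + b.val + 1, h⟩
     else 0)
  else 0

/-- The descending multiplication defining `U_k`, extended bilinearly. -/
def ukMul (k : ℕ) (u v : QV (2 ^ k - 1)) : QV (2 ^ k - 1) :=
  ∑ a : Fin (2 ^ k - 1), ∑ b : Fin (2 ^ k - 1), (u a * v b) • ukBasisMul k a b

/-!
Conjugating the bit flips `X^u` by a permutation gate of `f` in `𝒞₃` gives Clifford permutation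
gates, that is, affine maps `f x ↦ f (x + u)`. Hence `c = f - f 0` is a `1`-cocycle for the linear
parts of these maps, a representation of the `2`-group `𝔽₂ⁿ` over `𝔽₂`, which is unitriangular in a
suitable basis `b`. By the cocycle identity `c` pulls the flag of `b` back to a flag of subspaces,
so `b' = c⁻¹ ∘ b` is a basis too. Let `μ` be `c` in the coordinates `b'` and `b`; its inverse fixes
the standard basis.

Conjugating the phase flips `Z^z` shows that `μ⁻¹` is quadratic, and unitriangularity puts its
`yᵢyⱼ` coefficient in the span of the `eₖ` with `k > max i j`. So `μ⁻¹ y = y + ∑ yᵢyⱼ eₖ` over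
certain triples `i < j < k`. Running the gates `TOF_{i,j,k}` of these triples by increasing target
never changes a control that was already used, so the circuit maps `x` to the solution `y` of
`x = μ⁻¹ y`.
-/

section Gates

/-- The character `t ↦ (-1)^t` of `𝔽₂`, which provides the phases of the Pauli group. -/
noncomputable def signChar : AddChar (ZMod 2) ℂ :=
  AddChar.zmodChar 2 (ζ := -1) (by norm_num)

theorem signChar_injective : Function.Injective signChar := by
  intro s t h
  have map_sub : signChar (s - t) = 1 := by
    rw [AddChar.map_sub_eq_div, h, div_self (signChar.val_isUnit t).ne_zero]
  rw [signChar, AddChar.zmodChar_apply, neg_one_pow_eq_one_iff_even (by norm_num)] at map_sub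
  rwa [← sub_eq_zero, ← ZMod.natCast_zmod_val (s - t), ZMod.natCast_eq_zero_iff_even]

theorem XZGate_apply {n : ℕ} (u z a b : QV n) :
    XZGate n u z a b = if a = b + u then signChar (z ⬝ᵥ b) else 0 := by
  have h : z ⬝ᵥ b = ((∑ i, (z i).val * (b i).val : ℕ) : ZMod 2) := by simp [dotProduct]
  rw [h, signChar, AddChar.zmodChar_apply', XZGate]

theorem XZGate_mem_pauliGroup {n : ℕ} (u z : QV n) : XZGate n u z ∈ PauliGroup n :=
  ⟨1, u, z, .inl rfl, (one_smul ℂ _).symm⟩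

theorem permGate_eq_permMatrix {n : ℕ} (f : QV n ≃ QV n) :
    permGate n f = Equiv.Perm.permMatrix ℂ f.symm := by
  ext a b
  simp [permGate, Equiv.Perm.permMatrix, PEquiv.toMatrix_apply, Equiv.eq_symm_apply, eq_comm]

theorem star_permGate {n : ℕ} (f : QV n ≃ QV n) : star (permGate n f) = permGate n f.symm := by
  simp only [permGate_eq_permMatrix, Matrix.star_eq_conjTranspose, Matrix.conjTranspose_permMatrix]
  rfl

theorem permGate_mul_permGate {n : ℕ} (f g : QV n ≃ QV n) :
    permGate n f * permGate n g = permGate n (g.trans f) := by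
  simp only [permGate_eq_permMatrix]
  exact (Matrix.permMatrix_mul _ _).symm

theorem permGate_conj {n : ℕ} (f : QV n ≃ QV n) (M : QMat n) :
    permGate n f * M * star (permGate n f) = M.submatrix f.symm f.symm := by
  rw [star_permGate, permGate_eq_permMatrix, permGate_eq_permMatrix, Equiv.symm_symm,
    Equiv.Perm.permMatrix, Equiv.Perm.permMatrix, PEquiv.toMatrix_toPEquiv_mul,
    PEquiv.mul_toMatrix_toPEquiv, Matrix.submatrix_submatrix]
  rfl

theorem permGate_mem_unitaryGroup {n : ℕ} (f : QV n ≃ QV n) :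
    permGate n f ∈ Matrix.unitaryGroup (QV n) ℂ := by
  rw [Matrix.mem_unitaryGroup_iff]
  simpa using permGate_conj f 1

theorem XZGate_zero_right {n : ℕ} (u : QV n) : XZGate n u 0 = permGate n (Equiv.addRight u) := by
  ext a b
  simp only [XZGate_apply, zero_dotProduct, AddChar.map_zero_eq_one]
  rfl

end Gates

section Hierarchy

variable {n : ℕ}

theorem PauliGroup.finite (n : ℕ) : (PauliGroup n).Finite := by
  refine ((({1, -1, Complex.I, -Complex.I} : Set ℂ).toFinite.prod
    (Set.finite_univ (α := QV n × QV n))).image fun t => t.1 • XZGate n t.2.1 t.2.2).subset ?_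
  rintro _ ⟨c, u, z, hc, rfl⟩
  exact ⟨(c, u, z), ⟨hc, Set.mem_univ _⟩, rfl⟩

namespace CliffordLevel

theorem mul_right {k : ℕ} {U V : QMat n} (hU : U ∈ CliffordLevel n (k + 2))
    (hV : V ∈ CliffordLevel n 2) : U * V ∈ CliffordLevel n (k + 2) :=
  ⟨mul_mem hU.1 hV.1, fun P hP => by
    simpa only [star_mul, Matrix.mul_assoc] using hU.2 _ (hV.2 P hP)⟩

/-- Conjugation by a Clifford gate is injective on the finite Pauli group, hence surjective. -/
theorem star_mem {V : QMat n} (hV : V ∈ CliffordLevel n 2) : star V ∈ CliffordLevel n 2 := by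
  have star_mul_self : star V * V = 1 := Matrix.mem_unitaryGroup_iff'.mp hV.1
  have conj_cancel : Function.LeftInverse (fun P => star V * P * V) fun P => V * P * star V := by
    intro P
    dsimp only
    rw [Matrix.mul_assoc V P, ← Matrix.mul_assoc (star V), star_mul_self, Matrix.one_mul,
      Matrix.mul_assoc, star_mul_self, Matrix.mul_one]
  have conj_inj : Set.InjOn (fun P => V * P * star V) (PauliGroup n) :=
    conj_cancel.injective.injOn
  have conj_bij := ((PauliGroup.finite n).injOn_iff_bijOn_of_mapsTo hV.2).mp conj_inj
  refine ⟨Unitary.star_mem hV.1, fun P hP => ?_⟩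
  obtain ⟨Q, hQ, hQP⟩ := conj_bij.surjOn hP
  have conj_eq : star V * P * V = Q := by rw [← hQP]; exact conj_cancel Q
  exact (star_star V).symm ▸ conj_eq.symm ▸ hQ

theorem conj_mem {k : ℕ} {U V : QMat n} (hU : U ∈ CliffordLevel n (k + 1))
    (hV : V ∈ CliffordLevel n 2) : V * U * star V ∈ CliffordLevel n (k + 1) := by
  induction k generalizing U with
  | zero => exact hV.2 U hU
  | succ k ih =>
    refine ⟨mul_mem (mul_mem hV.1 hU.1) (star_mem hV).1, fun P hP => ?_⟩
    simpa only [star_mul, star_star, Matrix.mul_assoc] using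
      ih (hU.2 _ ((star_mem hV).2 P hP))

theorem mul_left {k : ℕ} {U V : QMat n} (hU : U ∈ CliffordLevel n (k + 2))
    (hV : V ∈ CliffordLevel n 2) : V * U ∈ CliffordLevel n (k + 2) := by
  have := mul_right (conj_mem hU hV) hV
  rwa [Matrix.mul_assoc, Matrix.mem_unitaryGroup_iff'.mp hV.1, Matrix.mul_one] at this

end CliffordLevel

end Hierarchy

section LowLevels

variable {n : ℕ}

theorem signChar_smul_mem_pauliGroup (t : ZMod 2) {P : QMat n} (hP : P ∈ PauliGroup n) :
    signChar t • P ∈ PauliGroup n := by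
  have ht : signChar t = 1 ∨ signChar t = -1 := neg_one_pow_eq_or ℂ t.val
  obtain ⟨c, u, z, hc, rfl⟩ := hP
  refine ⟨signChar t * c, u, z, ?_, smul_smul _ _ _⟩
  rcases ht with ht | ht <;> rcases hc with rfl | rfl | rfl | rfl <;> simp [ht]

theorem permGate_affineEquiv_conj_XZGate (A : QV n ≃ᵃ[ZMod 2] QV n) (u z : QV n) :
    ∃ z' : QV n, permGate n A.toEquiv * XZGate n u z * star (permGate n A.toEquiv) =
      signChar (z ⬝ᵥ A.symm 0) • XZGate n (A.linear u) z' := by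
  obtain ⟨z', hz'⟩ := (dotProductEquiv (ZMod 2) (Fin n)).surjective
    (dotProductEquiv (ZMod 2) (Fin n) z ∘ₗ A.symm.linear)
  refine ⟨z', ?_⟩
  have phase (b : QV n) : z ⬝ᵥ A.symm b = z' ⬝ᵥ b + z ⬝ᵥ A.symm 0 := by
    have symm_apply : A.symm b = A.symm.linear b + A.symm 0 :=
      congrFun A.symm.toAffineMap.decomp b
    rw [symm_apply, dotProduct_add]
    exact congrArg (· + _) (LinearMap.congr_fun hz' b).symm
  have support (a b : QV n) : A.symm a = A.symm b + u ↔ a = b + A.linear u := by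
    rw [eq_comm, AffineEquiv.eq_symm_apply, add_comm, add_comm b, eq_comm]
    have h := A.map_vadd (A.symm b) u
    rw [A.apply_symm_apply, vadd_eq_add, vadd_eq_add] at h
    rw [h]
  rw [permGate_conj]
  ext a b
  change XZGate n u z (A.symm a) (A.symm b) = _
  rw [Matrix.smul_apply, XZGate_apply, XZGate_apply, if_congr (support a b) rfl rfl, phase,
    AddChar.map_add_eq_mul, mul_comm (signChar (z' ⬝ᵥ b)), smul_eq_mul, mul_ite, mul_zero]

theorem permGate_affineEquiv_mem_cliffordLevel (A : QV n ≃ᵃ[ZMod 2] QV n) :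
    permGate n A.toEquiv ∈ CliffordLevel n 2 := by
  refine ⟨permGate_mem_unitaryGroup _, ?_⟩
  rintro _ ⟨c, u, z, hc, rfl⟩
  obtain ⟨z', conj_eq⟩ := permGate_affineEquiv_conj_XZGate A u z
  rw [Matrix.mul_smul, Matrix.smul_mul, conj_eq, smul_comm]
  exact signChar_smul_mem_pauliGroup _ ⟨c, _, z', hc, rfl⟩

theorem eq_addRight_of_permGate_mem_pauliGroup {g : QV n ≃ QV n}
    (hg : permGate n g ∈ PauliGroup n) : g = Equiv.addRight (g 0) := by
  obtain ⟨c, u, z, -, h⟩ := hg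
  have apply_eq (x : QV n) : g x = x + u := by
    by_contra hne
    have entry := congrFun₂ h (g x) x
    simp [XZGate_apply, permGate, hne] at entry
  ext1 x
  simp [apply_eq]

theorem permGate_conj_addRight_mem {k : ℕ} {g : QV n ≃ QV n}
    (hg : permGate n g ∈ CliffordLevel n (k + 2)) (w : QV n) :
    permGate n (g.symm.trans ((Equiv.addRight w).trans g)) ∈ CliffordLevel n (k + 1) := by
  simpa only [XZGate_zero_right, star_permGate, permGate_mul_permGate] using
    hg.2 _ (XZGate_mem_pauliGroup w 0)

theorem permGate_mem_cliffordLevel_two_iff {g : QV n ≃ QV n} :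
    permGate n g ∈ CliffordLevel n 2 ↔ ∃ A : QV n ≃ᵃ[ZMod 2] QV n, A.toEquiv = g := by
  refine ⟨fun hg => ?_, ?_⟩
  · have map_add (x w : QV n) : g (x + w) - g 0 = (g x - g 0) + (g w - g 0) := by
      have translation := eq_addRight_of_permGate_mem_pauliGroup (permGate_conj_addRight_mem hg w)
      have hx := Equiv.congr_fun translation (g x)
      have h0 := Equiv.congr_fun translation (g 0)
      simp only [Equiv.trans_apply, Equiv.symm_apply_apply, Equiv.coe_addRight, zero_add] at hx h0
      rw [hx, h0]
      abel
    let L := (AddMonoidHom.mk' (fun x => g x - g 0) map_add).toZModLinearMap 2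
    let A : QV n →ᵃ[ZMod 2] QV n := AffineMap.mk' g L 0 fun x => by simp [L]
    exact ⟨AffineEquiv.ofBijective (φ := A) g.bijective, Equiv.ext fun _ => rfl⟩
  · rintro ⟨A, rfl⟩
    exact permGate_affineEquiv_mem_cliffordLevel A

theorem diagonal_conj_XZGate (q : QV n → ZMod 2) (w : QV n) :
    Matrix.diagonal (fun a => signChar (q a)) * XZGate n w 0 *
      star (Matrix.diagonal fun a => signChar (q a)) =
    Matrix.of fun a b => if a = b + w then signChar (q (b + w) - q b) else 0 := by
  ext a b
  rw [Matrix.star_eq_conjTranspose, Matrix.diagonal_conjTranspose, Matrix.mul_diagonal,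
    Matrix.diagonal_mul, XZGate_apply, Matrix.of_apply]
  split_ifs with hab
  · rw [hab, sub_eq_add_neg, AddChar.map_add_eq_mul, AddChar.map_neg_eq_conj, zero_dotProduct,
      AddChar.map_zero_eq_one, mul_one]
    rfl
  · rw [mul_zero, zero_mul]

theorem exists_polar_eq_dotProduct_of_diagonal_mem {q : QV n → ZMod 2}
    (hq : Matrix.diagonal (fun a => signChar (q a)) ∈ CliffordLevel n 2) (w : QV n) :
    ∃ z : QV n, ∀ b, q (b + w) - q b - (q w - q 0) = z ⬝ᵥ b := by
  obtain ⟨c, u, z, -, h⟩ := hq.2 _ (XZGate_mem_pauliGroup w 0)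
  rw [diagonal_conj_XZGate] at h
  have entry (b : QV n) : signChar (q (b + w) - q b) =
      c * if b + w = b + u then signChar (z ⬝ᵥ b) else 0 := by
    simpa [XZGate_apply] using congrFun₂ h (b + w) b
  obtain rfl : w = u := by
    by_contra hne
    exact (signChar.val_isUnit _).ne_zero (by simpa [hne] using entry 0)
  have phase : c = signChar (q w - q 0) := by simpa using (entry 0).symm
  refine ⟨z, fun b => sub_eq_iff_eq_add.mpr (signChar_injective ?_)⟩
  rw [entry, if_pos rfl, phase, mul_comm, ← AddChar.map_add_eq_mul]

theorem exists_quadraticMap_of_polar_add {M N : Type*} [AddCommGroup M] [AddCommGroup N]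
    [Module (ZMod 2) M] [Module (ZMod 2) N] {q : M → N} (map_zero : q 0 = 0)
    (polar_add : ∀ x y w,
      QuadraticMap.polar q (x + y) w = QuadraticMap.polar q x w + QuadraticMap.polar q y w) :
    ∃ Q : QuadraticMap (ZMod 2) M N, ⇑Q = q := by
  have map_smul (a : ZMod 2) (x : M) : q (a • x) = (a * a) • q x := by
    obtain rfl | rfl := (by decide +revert : a = 0 ∨ a = 1) <;> simp [map_zero]
  have polar_smul (a : ZMod 2) (x w : M) :
      QuadraticMap.polar q (a • x) w = a • QuadraticMap.polar q x w :=
    ZMod.map_smul (AddMonoidHom.mk' (QuadraticMap.polar q · w) fun x y => polar_add x y w) a x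
  exact ⟨.ofPolar q map_smul polar_add polar_smul, rfl⟩

theorem exists_quadraticMap_symm_of_permGate_mem {f : QV n ≃ QV n}
    (hf : permGate n f ∈ CliffordLevel n 3) :
    ∃ Q : QuadraticMap (ZMod 2) (QV n) (QV n), ∀ x, Q x = f.symm x - f.symm 0 := by
  have coord_polar (i : Fin n) (w : QV n) :
      ∃ z, ∀ b, f.symm (b + w) i - f.symm b i - (f.symm w i - f.symm 0 i) = z ⬝ᵥ b := by
    have conj_mem := hf.2 _ (XZGate_mem_pauliGroup 0 (Pi.single i 1))
    have conj_eq : permGate n f * XZGate n 0 (Pi.single i 1) * star (permGate n f) =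
        Matrix.diagonal fun a => signChar (f.symm a i) := by
      rw [permGate_conj]
      ext a b
      simp +contextual [XZGate_apply, Matrix.diagonal_apply]
    rw [conj_eq] at conj_mem
    exact exists_polar_eq_dotProduct_of_diagonal_mem conj_mem w
  obtain ⟨Q, hQ⟩ := exists_quadraticMap_of_polar_add (q := fun x => f.symm x - f.symm 0)
    (sub_self _) fun x y w => by
      ext i
      obtain ⟨z, hz⟩ := coord_polar i w
      have polar_apply (b : QV n) :
          QuadraticMap.polar (fun x => f.symm x - f.symm 0) b w i = z ⬝ᵥ b := by
        rw [← hz b]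
        simp only [QuadraticMap.polar, Pi.sub_apply]
        abel
      simp only [Pi.add_apply, polar_apply, dotProduct_add]
  exact ⟨Q, congrFun hQ⟩

end LowLevels

open Module Submodule

section Unitriangular

/-- A family is unitriangular for a representation when every group element moves each of its
members only by a combination of later members: the matrices of `ρ g` in a unitriangular basis are
lower unitriangular. -/
def IsUnitriangular {k G V : Type*} [CommRing k] [Group G] [AddCommGroup V] [Module k V]
    (ρ : Representation k G V) {m : ℕ} (b : Fin m → V) : Prop :=
  ∀ g j, ρ g (b j) - b j ∈ span k (b '' Set.Ioi j)

namespace IsUnitriangular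

variable {k G V : Type*} [CommRing k] [Group G] [AddCommGroup V] [Module k V]
  {ρ : Representation k G V} {m : ℕ} {b : Fin m → V}

theorem span_image_le_comap (hb : IsUnitriangular ρ b) {s : Set (Fin m)} (hs : IsUpperSet s)
    (g : G) : span k (b '' s) ≤ (span k (b '' s)).comap (ρ g) := by
  rw [span_le]
  rintro _ ⟨j, hj, rfl⟩
  have displacement_mem : ρ g (b j) - b j ∈ span k (b '' s) :=
    span_mono (Set.image_mono fun i hi => hs (Set.mem_Ioi.mp hi).le hj) (hb g j)
  simpa using add_mem displacement_mem (subset_span (Set.mem_image_of_mem b hj))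

theorem finCons (hb : IsUnitriangular ρ b) {v : V}
    (hv : ∀ g, ρ g v - v ∈ span k (Set.range b)) :
    IsUnitriangular ρ (Fin.cons v b : Fin (m + 1) → V) := by
  intro g j
  cases j using Fin.cases with
  | zero =>
    have Ioi_zero : Set.Ioi (0 : Fin (m + 1)) = Set.range Fin.succ := by
      ext i
      simp [Fin.pos_iff_ne_zero]
    rw [Ioi_zero, ← Set.range_comp]
    simpa [Function.comp_def] using hv g
  | succ j => simpa [← Fin.image_succ_Ioi, Set.image_image] using hb g j

end IsUnitriangular

variable {p : ℕ} [Fact p.Prime] {G : Type*} [Group G] {V : Type*} [AddCommGroup V]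
  [Module (ZMod p) V] [Finite V]

theorem exists_notMem_forall_sub_mem_of_isPGroup (hG : IsPGroup p G)
    (ρ : Representation (ZMod p) G V) {W : Submodule (ZMod p) V}
    (hW : ∀ g, W ≤ W.comap (ρ g)) (hne : W ≠ ⊤) : ∃ v ∉ W, ∀ g, ρ g v - v ∈ W := by
  let _ : MulAction G (V ⧸ W) := MulAction.compHom _ (ρ.quotient W hW)
  have smul_mk (g : G) (v : V) : g • W.mkQ v = W.mkQ (ρ g v) := rfl
  have card_dvd : p ∣ Nat.card (V ⧸ W) := by
    rw [Module.natCard_eq_pow_finrank (K := ZMod p), Nat.card_zmod]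
    have : Nontrivial (V ⧸ W) := Submodule.Quotient.nontrivial_iff.mpr hne
    exact dvd_pow_self p Module.finrank_pos.ne'
  have : Finite (V ⧸ W) := Finite.of_surjective _ W.mkQ_surjective
  have zero_fixed : (0 : V ⧸ W) ∈ MulAction.fixedPoints G (V ⧸ W) := fun g => by
    rw [← map_zero W.mkQ, smul_mk, map_zero (ρ g)]
  obtain ⟨x, hx, x_ne⟩ :=
    hG.exists_fixed_point_of_prime_dvd_card_of_fixed_point _ card_dvd zero_fixed
  obtain ⟨v, rfl⟩ := W.mkQ_surjective x
  refine ⟨v, fun hv => x_ne ?_, fun g => ?_⟩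
  · exact ((Submodule.Quotient.mk_eq_zero W).mpr hv).symm
  · exact (Submodule.Quotient.eq W).mp (hx g)

theorem exists_isUnitriangular_of_isPGroup (hG : IsPGroup p G) (ρ : Representation (ZMod p) G V)
    {d : ℕ} (hd : finrank (ZMod p) V = d) :
    ∃ b : Basis (Fin d) (ZMod p) V, IsUnitriangular ρ b := by
  have flag (m : ℕ) (hm : m ≤ d) :
      ∃ b : Fin m → V, LinearIndependent (ZMod p) b ∧ IsUnitriangular ρ b := by
    induction m with
    | zero => exact ⟨Fin.elim0, linearIndependent_empty_type, fun _ j => j.elim0⟩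
    | succ m ih =>
      obtain ⟨b, hli, hb⟩ := ih (by omega)
      have span_ne_top : span (ZMod p) (Set.range b) ≠ ⊤ := fun htop => by
        have := finrank_span_eq_card hli
        rw [htop, finrank_top, Fintype.card_fin] at this
        omega
      have span_invariant (g : G) := hb.span_image_le_comap isUpperSet_univ g
      rw [Set.image_univ] at span_invariant
      obtain ⟨v, hv, hfix⟩ :=
        exists_notMem_forall_sub_mem_of_isPGroup hG ρ span_invariant span_ne_top
      exact ⟨Fin.cons v b, linearIndependent_finCons.mpr ⟨hli, hv⟩, hb.finCons hfix⟩
  obtain ⟨b, hli, hb⟩ := flag d le_rfl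
  have card_eq : Fintype.card (Fin d) = finrank (ZMod p) V := by rw [Fintype.card_fin, hd]
  exact ⟨basisOfLinearIndependentOfCardEqFinrank' b hli card_eq, by simpa using hb⟩

end Unitriangular

section Cocycle

/-- A `1`-cocycle of an additive group with values in a representation. For a permutation `f` whose
gate lies in `𝒞₃`, the gates `f X^u f†` act on `f - f 0` by affine maps, which makes it a cocycle
for their linear parts. -/
def IsCocycle {k U V : Type*} [CommRing k] [AddCommGroup U] [AddCommGroup V] [Module k V]
    (ρ : Representation k (Multiplicative U) V) (c : U → V) : Prop :=
  ∀ x y, c (x + y) = ρ (.ofAdd y) (c x) + c y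

namespace IsCocycle

theorem map_zero {k U V : Type*} [CommRing k] [AddCommGroup U] [AddCommGroup V] [Module k V]
    {ρ : Representation k (Multiplicative U) V} {c : U → V} (hc : IsCocycle ρ c) : c 0 = 0 := by
  simpa using hc 0 0

variable {p : ℕ} {U V : Type*} [AddCommGroup U] [Module (ZMod p) U] [AddCommGroup V]
  [Module (ZMod p) V] {ρ : Representation (ZMod p) (Multiplicative U) V} {c : U → V}

/-- The preimage of an invariant subspace under a cocycle is a subspace, although the cocycle need
not be linear. -/
def comap (hc : IsCocycle ρ c) (W : Submodule (ZMod p) V) (hW : ∀ g, W ≤ W.comap (ρ g)) :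
    Submodule (ZMod p) U :=
  AddSubgroup.toZModSubmodule p
    { carrier := c ⁻¹' W
      add_mem' := fun {x y} hx hy => by
        rw [Set.mem_preimage, hc]
        exact add_mem (hW _ hx) hy
      zero_mem' := by simp [hc.map_zero]
      neg_mem' := fun {x} hx => by
        have h := hc x (-x)
        rw [add_neg_cancel, hc.map_zero] at h
        rw [Set.mem_preimage, eq_neg_of_add_eq_zero_right h.symm]
        exact neg_mem (hW _ hx) }

theorem mem_comap (hc : IsCocycle ρ c) {W : Submodule (ZMod p) V}
    (hW : ∀ g, W ≤ W.comap (ρ g)) {x : U} : x ∈ hc.comap W hW ↔ c x ∈ W :=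
  Iff.rfl

theorem sub_mem_comap (hc : IsCocycle ρ c) {W : Submodule (ZMod p) V}
    (hW : ∀ g, W ≤ W.comap (ρ g)) {x y : U} (hxy : c y - c x ∈ W) : y - x ∈ hc.comap W hW := by
  have translated : ρ (.ofAdd x) (c (y - x)) ∈ W := by
    have h := hc (y - x) x
    rw [sub_add_cancel, ← sub_eq_iff_eq_add] at h
    exact h ▸ hxy
  simpa [mem_comap] using hW (.ofAdd x)⁻¹ translated

end IsCocycle

theorem coeff_eq_zero_of_sum_smul_mem {k U : Type*} [Field k] [AddCommGroup U] [Module k U] {m : ℕ}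
    {F : Fin m → Submodule k U} (hF : Antitone F) {v : Fin m → U} (hlt : ∀ i j, i < j → v j ∈ F i)
    (hnot : ∀ i, v i ∉ F i) {a : Fin m → k} {j : Fin m} (ha : ∑ i, a i • v i ∈ F j) {i : Fin m}
    (hij : i ≤ j) : a i = 0 := by
  induction i using WellFoundedLT.induction with
  | ind i ih =>
    have tail_mem : ∑ l ∈ Finset.univ.erase i, a l • v l ∈ F i := by
      refine sum_mem fun l hl => ?_
      obtain hli | hil := lt_or_gt_of_ne (Finset.ne_of_mem_erase hl)
      · rw [ih l hli (hli.le.trans hij), zero_smul]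
        exact zero_mem _
      · exact (F i).smul_mem _ (hlt i l hil)
    rw [← Finset.add_sum_erase _ _ (Finset.mem_univ i)] at ha
    have lead_mem : a i • v i ∈ F i := ((F i).add_mem_iff_left tail_mem).mp (hF hij ha)
    by_contra hne
    exact hnot i (((F i).smul_mem_iff hne).mp lead_mem)

theorem finrank_zmod_eq_of_equiv {p : ℕ} [Fact p.Prime] {U V : Type*} [AddCommGroup U]
    [Module (ZMod p) U] [AddCommGroup V] [Module (ZMod p) V] [Finite V] (e : U ≃ V) :
    finrank (ZMod p) U = finrank (ZMod p) V := by
  have : Finite U := .of_equiv V e.symm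
  have card_eq := Nat.card_congr e
  rw [Module.natCard_eq_pow_finrank (K := ZMod p) (V := U),
    Module.natCard_eq_pow_finrank (K := ZMod p) (V := V), Nat.card_zmod] at card_eq
  exact Nat.pow_right_injective (Fact.out : p.Prime).two_le card_eq

namespace IsCocycle

variable {p : ℕ} [Fact p.Prime] {U V : Type*} [AddCommGroup U] [Module (ZMod p) U]
  [AddCommGroup V] [Module (ZMod p) V] {ρ : Representation (ZMod p) (Multiplicative U) V}
  {c : U ≃ V} {m : ℕ} {b : Basis (Fin m) (ZMod p) V}

theorem coeff_eq_zero_of_apply_sum_mem (hc : IsCocycle ρ c) (hb : IsUnitriangular ρ b)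
    {a : Fin m → ZMod p} {j : Fin m}
    (ha : c (∑ i, a i • c.symm (b i)) ∈ span (ZMod p) (b '' Set.Ioi j)) {i : Fin m} (hij : i ≤ j) :
    a i = 0 := by
  have invariant (j : Fin m) := hb.span_image_le_comap (isUpperSet_Ioi j)
  let F (j : Fin m) := hc.comap _ (invariant j)
  have F_antitone : Antitone F := fun i j hij x hx =>
    span_mono (Set.image_mono (Set.Ioi_subset_Ioi hij)) hx
  have mem_F (i j : Fin m) (hij : i < j) : c.symm (b j) ∈ F i := by
    rw [mem_comap, c.apply_symm_apply]
    exact subset_span (Set.mem_image_of_mem b hij)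
  have notMem_F (i : Fin m) : c.symm (b i) ∉ F i := by
    rw [mem_comap, c.apply_symm_apply]
    exact b.linearIndependent.notMem_span_image Set.self_notMem_Ioi
  exact coeff_eq_zero_of_sum_smul_mem F_antitone mem_F notMem_F (j := j) ha hij

theorem exists_basis_symm (hc : IsCocycle ρ c) (hb : IsUnitriangular ρ b) :
    ∃ b' : Basis (Fin m) (ZMod p) U, ⇑b' = c.symm ∘ b := by
  have independent : LinearIndependent (ZMod p) (c.symm ∘ b) := by
    refine Fintype.linearIndependent_iff.mpr fun a ha i => ?_
    refine hc.coeff_eq_zero_of_apply_sum_mem hb (j := i) ?_ le_rfl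
    simp only [Function.comp_apply] at ha
    rw [ha, hc.map_zero]
    exact zero_mem _
  have : Module.Finite (ZMod p) V := .of_basis b
  have : Finite V := Module.finite_of_finite (ZMod p)
  have card_eq : Fintype.card (Fin m) = finrank (ZMod p) U := by
    rw [finrank_zmod_eq_of_equiv c, finrank_eq_card_basis b]
  have : Finite U := .of_equiv V c.symm
  exact ⟨basisOfLinearIndependentOfCardEqFinrank' _ independent card_eq, by simp⟩

/-- `c (b' j + b' i)` and `c (b' i) + c (b' j)` differ by the displacement of `b j` under
the group element `b' i`. -/
theorem repr_symm_add_sub_eq_zero (hc : IsCocycle ρ c) (hb : IsUnitriangular ρ b)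
    {b' : Basis (Fin m) (ZMod p) U} (hb' : ⇑b' = c.symm ∘ b) (i : Fin m) {j l : Fin m}
    (hlj : l ≤ j) : b'.repr (c.symm (b i + b j) - (b' i + b' j)) l = 0 := by
  have apply_b' (i : Fin m) : c (b' i) = b i := by simp [hb']
  have displacement_mem :
      c (c.symm (b i + b j)) - c (b' i + b' j) ∈ span (ZMod p) (b '' Set.Ioi j) := by
    rw [add_comm (b' i), hc, apply_b', apply_b', c.apply_symm_apply, add_comm (b i),
      add_sub_add_right_eq_sub, sub_mem_comm_iff]
    exact hb _ j
  have expand (x : U) : ∑ i, b'.repr x i • c.symm (b i) = x := by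
    have h := b'.sum_repr x
    rwa [hb'] at h
  refine hc.coeff_eq_zero_of_apply_sum_mem hb ?_ hlj
  rw [expand]
  exact hc.sub_mem_comap (hb.span_image_le_comap (isUpperSet_Ioi j)) displacement_mem

end IsCocycle

end Cocycle

section CliffordCocycle

theorem exists_isCocycle_of_affineMap {k U V : Type*} [CommRing k] [AddCommGroup U]
    [AddCommGroup V] [Module k V] {f : U ≃ V} (A : U → V →ᵃ[k] V)
    (hA : ∀ u x, A u (f x) = f (x + u)) :
    ∃ ρ : Representation k (Multiplicative U) V,
      IsCocycle ρ (f.trans (Equiv.subRight (f 0))) := by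
  have A_apply (u : U) (x : V) : A u x = f (f.symm x + u) := by
    rw [← hA, f.apply_symm_apply]
  let affineAction : Multiplicative U →* (V →ᵃ[k] V) :=
    { toFun u := A u.toAdd
      map_one' := by
        ext x
        simp [A_apply]
      map_mul' u v := by
        ext x
        simp [A_apply, add_comm, add_left_comm] }
  refine ⟨AffineMap.linearHom.comp affineAction, fun x y => ?_⟩
  change f (x + y) - f 0 = (A y).linear (f x - f 0) + (f y - f 0)
  have h := (A y).linearMap_vsub (f x) (f 0)
  rw [vsub_eq_sub, vsub_eq_sub, hA, hA, zero_add] at h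
  rw [h, sub_add_sub_cancel]

theorem exists_isCocycle_of_permGate_mem {n : ℕ} {f : QV n ≃ QV n}
    (hf : permGate n f ∈ CliffordLevel n 3) :
    ∃ ρ : Representation (ZMod 2) (Multiplicative (QV n)) (QV n),
      IsCocycle ρ (f.trans (Equiv.subRight (f 0))) := by
  choose A hA using fun u =>
    permGate_mem_cliffordLevel_two_iff.mp (permGate_conj_addRight_mem hf u)
  refine exists_isCocycle_of_affineMap (fun u => (A u).toAffineMap) fun u x => ?_
  simpa using Equiv.congr_fun (hA u) (f x)

end CliffordCocycle

section Staircase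

variable {n : ℕ}

/-- The map on `𝔽₂ⁿ` computed by the circuit `L` of Toffoli gates `TOF_{i,j,k}`, listed as
triples `(i, j, k)` in the order in which they are applied. -/
def toffoliCircuit (L : List (Fin n × Fin n × Fin n)) (v : QV n) : QV n :=
  L.foldl (fun w t => tofFun n t.1 t.2.1 t.2.2 w) v

theorem tofFun_apply_of_ne {i j k m : Fin n} (hm : m ≠ k) (v : QV n) :
    tofFun n i j k v m = v m :=
  if_neg hm

/-- Since targets are nondecreasing, no control is retargeted after its gate has been applied, so
controls can be read off the output. -/
theorem toffoliCircuit_apply {L : List (Fin n × Fin n × Fin n)}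
    (hlt : ∀ t ∈ L, t.1 < t.2.1 ∧ t.2.1 < t.2.2) (hL : L.Pairwise fun s t => s.2.2 ≤ t.2.2)
    (v : QV n) (m : Fin n) :
    toffoliCircuit L v m = v m + (L.map fun t =>
      if t.2.2 = m then toffoliCircuit L v t.1 * toffoliCircuit L v t.2.1 else 0).sum := by
  induction L using List.reverseRecOn generalizing m with
  | nil => simp [toffoliCircuit]
  | append_singleton L t ih =>
    obtain ⟨hL, -, target_le⟩ := List.pairwise_append.mp hL
    have ih := ih (fun s hs => hlt s (by simp [hs])) hL
    obtain ⟨ht₁, ht₂⟩ := hlt t (by simp)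
    have append_apply : toffoliCircuit (L ++ [t]) v =
        tofFun n t.1 t.2.1 t.2.2 (toffoliCircuit L v) := by
      simp [toffoliCircuit]
    have controls_unchanged : ∀ s ∈ L, ∀ i, i ≤ s.2.1 →
        tofFun n t.1 t.2.1 t.2.2 (toffoliCircuit L v) i = toffoliCircuit L v i := by
      intro s hs i hi
      have hs₂ := (hlt s (by simp [hs])).2
      exact tofFun_apply_of_ne (hi.trans_lt (hs₂.trans_le (target_le s hs t (by simp)))).ne _
    rw [append_apply, List.map_append, List.sum_append, ← add_assoc]
    rw [List.map_congr_left fun s hs => by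
      rw [controls_unchanged s hs _ (hlt s (by simp [hs])).1.le, controls_unchanged s hs _ le_rfl]]
    rw [← ih m, List.map_singleton, List.sum_singleton, tofFun_apply_of_ne (ht₁.trans ht₂).ne,
      tofFun_apply_of_ne ht₂.ne]
    by_cases hm : m = t.2.2
    · simp [tofFun, hm]
    · rw [tofFun_apply_of_ne hm, if_neg (Ne.symm hm), add_zero]

theorem isStaircase_of_symm_apply {μ : QV n ≃ QV n} {T : Finset (Fin n × Fin n × Fin n)}
    (hT : ∀ t ∈ T, t.1 < t.2.1 ∧ t.2.1 < t.2.2)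
    (hμ : ∀ y m, μ.symm y m = y m + ∑ t ∈ T, if t.2.2 = m then y t.1 * y t.2.1 else 0) :
    IsStaircase n μ := by
  let targetLE (s t : Fin n × Fin n × Fin n) : Prop := s.2.2 ≤ t.2.2
  have : Std.Total targetLE := ⟨fun s t => le_total s.2.2 t.2.2⟩
  have : IsTrans _ targetLE := ⟨fun _ _ _ => le_trans⟩
  let L := T.toList.insertionSort targetLE
  have perm : L.Perm T.toList := List.perm_insertionSort _ _
  have sorted : L.Pairwise targetLE := List.pairwise_insertionSort _ _
  have hlt : ∀ t ∈ L, t.1 < t.2.1 ∧ t.2.1 < t.2.2 := fun t ht =>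
    hT t (Finset.mem_toList.mp (perm.mem_iff.mp ht))
  refine ⟨L, perm.nodup_iff.mpr T.nodup_toList, hlt, sorted.isChain, funext fun v => ?_⟩
  change μ v = toffoliCircuit L v
  rw [← Equiv.eq_symm_apply]
  ext m
  rw [hμ, toffoliCircuit_apply hlt sorted, (perm.map _).sum_eq, Finset.sum_map_toList, add_assoc,
    CharTwo.add_self_eq_zero, add_zero]

theorem quadraticMap_apply_eq_sum {ι R M N : Type*} [Fintype ι] [LinearOrder ι] [CommRing R]
    [AddCommGroup M] [AddCommGroup N] [Module R M] [Module R N] (Q : QuadraticMap R M N)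
    (b : Basis ι R M) (x : M) :
    Q x = ∑ i, (b.repr x i * b.repr x i) • Q (b i) + ∑ i, ∑ j, if i < j then
      (b.repr x i * b.repr x j) • QuadraticMap.polar Q (b i) (b j) else 0 := by
  have expand : Q x = ∑ i, ∑ j, (b.repr x i * b.repr x j) • Q.toBilin b (b i) (b j) := by
    conv_lhs => rw [← Q.toQuadraticMap_toBilin b, LinearMap.BilinMap.toQuadraticMap_apply]
    rw [← LinearMap.sum_repr_mul_repr_mul b b x x]
    simp [Finsupp.sum_fintype, mul_smul]
  have diagonal (i : ι) : (b.repr x i * b.repr x i) • Q (b i) =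
      ∑ j, if i = j then (b.repr x i * b.repr x j) • Q (b i) else 0 := by simp
  simp only [expand, diagonal, ← Finset.sum_add_distrib, QuadraticMap.toBilin_apply]
  refine Finset.sum_congr rfl fun i _ => Finset.sum_congr rfl fun j _ => ?_
  obtain rfl | hij := eq_or_ne i j
  · simp
  · simp [hij]

theorem isStaircase_of_symm_quadraticMap {μ : QV n ≃ QV n}
    {Q : QuadraticMap (ZMod 2) (QV n) (QV n)} (hQ : ⇑Q = μ.symm)
    (map_single : ∀ i, Q (Pi.single i 1) = Pi.single i 1)
    (polar_single : ∀ i j m, m ≤ j →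
      QuadraticMap.polar Q (Pi.single i 1) (Pi.single j 1) m = 0) :
    IsStaircase n μ := by
  let coeff (i j m : Fin n) := QuadraticMap.polar Q (Pi.single i 1) (Pi.single j 1) m
  have coeff_cases (i j m : Fin n) : coeff i j m = 0 ∨ coeff i j m = 1 := by
    generalize coeff i j m = a
    decide +revert
  have mul_self (a : ZMod 2) : a * a = a := by decide +revert
  refine isStaircase_of_symm_apply
    (T := {t | t.1 < t.2.1 ∧ t.2.1 < t.2.2 ∧ coeff t.1 t.2.1 t.2.2 = 1}) (by simp +contextual)
    fun y m => ?_
  have linear_part : ∑ i, (y i * y i) • Q (Pi.single i 1) = y := by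
    simp only [mul_self, map_single]
    exact (pi_eq_sum_univ' y).symm
  have toffoli_part (i j : Fin n) :
      (if i < j then (y i * y j) • QuadraticMap.polar Q (Pi.single i 1) (Pi.single j 1)
        else 0 : QV n) m =
      if i < j ∧ j < m ∧ coeff i j m = 1 then y i * y j else 0 := by
    by_cases hij : i < j
    · obtain hjm | hmj := lt_or_ge j m
      · obtain h | h := coeff_cases i j m <;> simp_all [coeff]
      · simp [hij, hmj.not_gt, polar_single i j m hmj]
    · simp [hij]
  have eval := congrFun (quadraticMap_apply_eq_sum Q (Pi.basisFun (ZMod 2) (Fin n)) y) m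
  simp only [Pi.basisFun_repr, Pi.basisFun_apply, linear_part, Pi.add_apply, Finset.sum_apply,
    toffoli_part] at eval
  rw [← hQ, eval, Finset.sum_filter]
  simp only [Fintype.sum_prod_type, ← ite_and, and_comm (b := _ = m)]
  simp only [ite_and (_ = m), Finset.sum_ite_eq', Finset.mem_univ, if_true]

theorem IsCocycle.isStaircase {U V : Type*} [AddCommGroup U] [Module (ZMod 2) U] [AddCommGroup V]
    [Module (ZMod 2) V] {ρ : Representation (ZMod 2) (Multiplicative U) V} {c : U ≃ V}
    {b : Basis (Fin n) (ZMod 2) V} {b' : Basis (Fin n) (ZMod 2) U} (hc : IsCocycle ρ c)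
    (hb : IsUnitriangular ρ b) (hb' : ⇑b' = c.symm ∘ b) {μ : QV n ≃ QV n}
    (hμ : ∀ x, μ.symm x = b'.equivFun (c.symm (b.equivFun.symm x)))
    {Q : QuadraticMap (ZMod 2) (QV n) (QV n)} (hQ : ∀ x, Q x = μ.symm x - μ.symm 0) :
    IsStaircase n μ := by
  have symm_zero : c.symm 0 = 0 := c.symm_apply_eq.mpr hc.map_zero.symm
  have Q_equivFun (v : V) : Q (b.equivFun v) = b'.equivFun (c.symm v) := by
    simp [hQ, hμ, symm_zero]
  have equivFun_b (i : Fin n) : b.equivFun (b i) = Pi.single i 1 := by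
    simp [Finsupp.single_eq_pi_single]
  have equivFun_b' (i : Fin n) : b'.equivFun (b' i) = Pi.single i 1 := by
    simp [Finsupp.single_eq_pi_single]
  have map_single (i : Fin n) : Q (Pi.single i 1) = Pi.single i 1 := by
    have symm_b : c.symm (b i) = b' i := by simp [hb']
    rw [← equivFun_b, Q_equivFun, symm_b, equivFun_b', equivFun_b]
  refine isStaircase_of_symm_quadraticMap (Q := Q) ?_ map_single fun i j m hmj => ?_
  · ext1 x
    simp [hQ, hμ, symm_zero]
  · have polar_eq : QuadraticMap.polar Q (Pi.single i 1) (Pi.single j 1) =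
        b'.equivFun (c.symm (b i + b j) - (b' i + b' j)) := by
      rw [QuadraticMap.polar, map_single, map_single, sub_sub, _root_.map_sub,
        _root_.map_add b'.equivFun, equivFun_b', equivFun_b', ← Q_equivFun,
        _root_.map_add b.equivFun, equivFun_b, equivFun_b]
    rw [polar_eq]
    exact hc.repr_symm_add_sub_eq_zero hb hb' i hmj

end Staircase

/-- Every permutation gate in `𝒞₃` is, up to left/right multiplication by
Clifford permutation gates, a staircase-form permutation gate in `𝒞₃`. -/
theorem stmt0 (n : ℕ) (hn : 1 ≤ n) (f : QV n ≃ QV n)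
    (hf : permGate n f ∈ CliffordLevel n 3) :
    ∃ φ₁ φ₂ μ : QV n ≃ QV n,
      permGate n φ₁ ∈ CliffordLevel n 2 ∧
      permGate n φ₂ ∈ CliffordLevel n 2 ∧
      IsStaircase n ⇑μ ∧
      permGate n μ ∈ CliffordLevel n 3 ∧
      f = (φ₂.trans μ).trans φ₁ := by
  obtain ⟨ρ, hc⟩ := exists_isCocycle_of_permGate_mem hf
  obtain ⟨b, hb⟩ := exists_isUnitriangular_of_isPGroup ZModModule.isPGroup_multiplicative ρ
    (finrank_fin_fun (ZMod 2))
  obtain ⟨b', hb'⟩ := hc.exists_basis_symm hb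
  let φ₁ : QV n ≃ᵃ[ZMod 2] QV n :=
    b.equivFun.symm.toAffineEquiv.trans (AffineEquiv.constVAdd _ _ (f 0))
  let φ₂ : QV n ≃ᵃ[ZMod 2] QV n := b'.equivFun.toAffineEquiv
  let μ : QV n ≃ QV n := (φ₂.symm.toEquiv.trans f).trans φ₁.symm.toEquiv
  have permGate_μ_mem : permGate n μ ∈ CliffordLevel n 3 := by
    rw [← permGate_mul_permGate, ← permGate_mul_permGate]
    exact .mul_left (.mul_right hf (permGate_affineEquiv_mem_cliffordLevel _))
      (permGate_affineEquiv_mem_cliffordLevel _)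
  obtain ⟨Q, hQ⟩ := exists_quadraticMap_symm_of_permGate_mem permGate_μ_mem
  refine ⟨φ₁.toEquiv, φ₂.toEquiv, μ, permGate_affineEquiv_mem_cliffordLevel φ₁,
    permGate_affineEquiv_mem_cliffordLevel φ₂, hc.isStaircase hb hb' (fun x => ?_) hQ,
    permGate_μ_mem, ?_⟩
  · simp [μ, φ₁, φ₂, add_comm (f 0)]
  · ext1 x
    simp [μ]
end

section
/- For any descending multiplication on 𝔽₂ⁿ, the map π on 𝔽₂ⁿ defined by π(∑_{i∈S} eᵢ) = ∑_{∅≠T⊆S} ∏_{i∈T} eᵢ for every S ⊆ [n] is a bijection of 𝔽₂ⁿ, and the corresponding permutation gate is in staircase form and lies in 𝒞₃. -/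
/-!
In the unitization of the commutative algebra `(𝔽₂ⁿ, mul)` one has `1 + π v = ∏ i, (1 + vᵢ eᵢ)`,
and since `eᵢ² = 0` each factor turns sums of `vᵢ` into products. So `π` is a homomorphism from
`(𝔽₂ⁿ, +)` to the circle group `x ∘ y = x + y + xy`; it is unitriangular since the multiplication
is descending, hence bijective. As all squares vanish, `x + y = x ∘ y ∘ xy`, so `log = π⁻¹`
satisfies `log (x + y) = log x + log y + log (xy)` with `log (xy)` biadditive: it is a quadratic
map.

Expanding `v = log (π v)` in the standard basis gives
`(π v)ₖ = vₖ + ∑_{i < j} log (eᵢ eⱼ)ₖ (π v)ᵢ (π v)ⱼ` with only `j < k` contributing, which is a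
staircase of Toffoli gates. Conjugation by the gate of `π` takes `X^u` to the permutation gate of
the affine map `b ↦ b ∘ π u`, and `Z^z` to the diagonal gate with quadratic phase
`(-1) ^ (z · log b)`. Products of these two kinds of gates are Clifford.
-/

/-! ### Clifford gates with affine permutation and quadratic phase -/

section Monomial

variable {V R : Type*} [DecidableEq V]

/-- The generalized permutation matrix sending the basis vector `|b⟩` to `d b • |σ b⟩`. Pauli gates
and permutation gates are both of this shape, which is stable under conjugation. -/
def monomialMatrix [Zero R] (σ : Equiv.Perm V) (d : V → R) : Matrix V V R :=
  Matrix.of fun a b => if a = σ b then d b else 0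

theorem monomialMatrix_apply [Zero R] (σ : Equiv.Perm V) (d : V → R) (a b : V) :
    monomialMatrix σ d a b = if a = σ b then d b else 0 :=
  rfl

theorem monomialMatrix_one [Zero R] [One R] :
    monomialMatrix (1 : Equiv.Perm V) (1 : V → R) = 1 := by
  ext a b
  exact (Matrix.one_apply ..).symm

theorem smul_monomialMatrix [MulZeroClass R] (c : R) (σ : Equiv.Perm V) (d : V → R) :
    c • monomialMatrix σ d = monomialMatrix σ (c • d) := by
  ext a b
  simp [monomialMatrix_apply]

theorem monomialMatrix_mul [Fintype V] [NonUnitalNonAssocSemiring R] (σ τ : Equiv.Perm V)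
    (d e : V → R) :
    monomialMatrix σ d * monomialMatrix τ e = monomialMatrix (σ * τ) fun b => d (τ b) * e b := by
  ext a b
  simp only [Matrix.mul_apply, monomialMatrix_apply, mul_ite, mul_zero, Finset.sum_ite_eq',
    Finset.mem_univ, if_true, ite_mul, zero_mul]
  rfl

theorem star_monomialMatrix [AddMonoid R] [StarAddMonoid R] (σ : Equiv.Perm V) (d : V → R) :
    star (monomialMatrix σ d) = monomialMatrix σ⁻¹ fun a => star (d (σ⁻¹ a)) := by
  ext a b
  have inverse : b = σ a ↔ a = σ⁻¹ b := by rw [Equiv.Perm.eq_inv_iff_eq, eq_comm]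
  rw [Matrix.star_apply, monomialMatrix_apply, monomialMatrix_apply, apply_ite star, star_zero]
  by_cases h : a = σ⁻¹ b
  · rw [if_pos h, if_pos (inverse.mpr h), h]
  · rw [if_neg h, if_neg (inverse.not.mpr h)]

theorem monomialMatrix_mem_unitaryGroup [Fintype V] [CommRing R] [StarRing R] (σ : Equiv.Perm V)
    {d : V → R} (hd : ∀ b, d b * star (d b) = 1) :
    monomialMatrix σ d ∈ Matrix.unitaryGroup V R := by
  rw [Matrix.mem_unitaryGroup_iff, star_monomialMatrix, monomialMatrix_mul, mul_inv_cancel,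
    ← monomialMatrix_one]
  exact congrArg _ (funext fun b => hd (σ⁻¹ b))

theorem monomialMatrix_conj [Fintype V] [NonUnitalSemiring R] [StarRing R]
    (σ τ : Equiv.Perm V) (d e : V → R) :
    monomialMatrix σ d * monomialMatrix τ e * star (monomialMatrix σ d) =
      monomialMatrix (σ * τ * σ⁻¹) fun b =>
        d (τ (σ⁻¹ b)) * e (σ⁻¹ b) * star (d (σ⁻¹ b)) := by
  rw [star_monomialMatrix, monomialMatrix_mul, monomialMatrix_mul]

end Monomial

theorem signChar_natCast (k : ℕ) : signChar k = (-1) ^ k :=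
  AddChar.zmodChar_apply' _ k

theorem star_signChar (a : ZMod 2) : star (signChar a) = signChar a := by
  rw [← starRingEnd_apply, ← AddChar.map_neg_eq_conj, ZModModule.neg_eq_self]

theorem signChar_mul_self (a : ZMod 2) : signChar a * signChar a = 1 := by
  rw [← AddChar.map_add_eq_mul, ZModModule.add_self, AddChar.map_zero_eq_one]

section Gates

variable {n : ℕ}

theorem permGate_eq_monomialMatrix (f : QV n ≃ QV n) : permGate n f = monomialMatrix f 1 :=
  rfl

theorem XZGate_eq_monomialMatrix (u z : QV n) :
    XZGate n u z = monomialMatrix (Equiv.addRight u) fun b => signChar (z ⬝ᵥ b) := by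
  ext a b
  have exponent : z ⬝ᵥ b = ((∑ i, (z i).val * (b i).val : ℕ) : ZMod 2) := by simp [dotProduct]
  simp only [XZGate, monomialMatrix_apply, exponent, signChar_natCast, Equiv.coe_addRight]

theorem pow_four_eq_one_iff_complex {c : ℂ} :
    c ^ 4 = 1 ↔ c = 1 ∨ c = -1 ∨ c = Complex.I ∨ c = -Complex.I := by
  have factorization : c ^ 4 - 1 = (c - 1) * ((c + 1) * ((c - Complex.I) * (c + Complex.I))) := by
    linear_combination (c ^ 2 - 1) * Complex.I_sq
  rw [← sub_eq_zero, factorization]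
  simp only [mul_eq_zero, sub_eq_zero, add_eq_zero_iff_eq_neg]

theorem mem_PauliGroup_iff {P : QMat n} :
    P ∈ PauliGroup n ↔ ∃ (c : ℂ) (u z : QV n), c ^ 4 = 1 ∧ P = c • XZGate n u z := by
  simp only [pow_four_eq_one_iff_complex]
  rfl

theorem smul_mem_CliffordLevel {c : ℂ} (hc : c ^ 4 = 1) {U : QMat n} :
    ∀ {k : ℕ}, U ∈ CliffordLevel n k → c • U ∈ CliffordLevel n k
  | 0, hU => hU.elim
  | 1, hU => by
    obtain ⟨d, u, z, hd, rfl⟩ := mem_PauliGroup_iff.mp hU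
    exact mem_PauliGroup_iff.mpr ⟨c * d, u, z, by rw [mul_pow, hc, hd, one_mul], smul_smul c d _⟩
  | k + 2, ⟨unitary, conj⟩ => by
    have phase : c * star c = 1 := by
      simp [Complex.mul_conj', Complex.norm_eq_one_of_pow_eq_one hc four_ne_zero]
    refine ⟨?_, fun P hP => ?_⟩
    · rw [Matrix.mem_unitaryGroup_iff] at unitary ⊢
      rw [star_smul, smul_mul_smul_comm, phase, one_smul, unitary]
    · rw [star_smul, smul_mul_assoc, smul_mul_smul_comm, phase, one_smul]
      exact conj P hP

theorem mem_CliffordLevel_of_conj_XZGate {k : ℕ} {U : QMat n}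
    (unitary : U ∈ Matrix.unitaryGroup (QV n) ℂ)
    (conj : ∀ u z, U * XZGate n u z * star U ∈ CliffordLevel n (k + 1)) :
    U ∈ CliffordLevel n (k + 2) := by
  refine ⟨unitary, fun P hP => ?_⟩
  obtain ⟨c, u, z, hc, rfl⟩ := mem_PauliGroup_iff.mp hP
  rw [mul_smul_comm, smul_mul_assoc]
  exact smul_mem_CliffordLevel hc (conj u z)

theorem monomialMatrix_addRight_affine_mem_PauliGroup (u : QV n) (φ : QV n →ᵃ[ZMod 2] ZMod 2) :
    monomialMatrix (Equiv.addRight u) (fun b => signChar (φ b)) ∈ PauliGroup n := by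
  obtain ⟨z, hz⟩ := (dotProductEquiv (ZMod 2) (Fin n)).surjective φ.linear
  have phase (b : QV n) : φ b = φ 0 + z ⬝ᵥ b := by
    rw [add_comm, congrFun φ.decomp b, ← hz]
    rfl
  refine mem_PauliGroup_iff.mpr ⟨signChar (φ 0), u, z, ?_, ?_⟩
  · linear_combination (signChar (φ 0) ^ 2 + 1) * signChar_mul_self (φ 0)
  · rw [XZGate_eq_monomialMatrix, smul_monomialMatrix]
    exact congrArg _ (funext fun b => by rw [phase, AddChar.map_add_eq_mul]; rfl)

theorem monomialMatrix_affineEquiv_quadraticForm_mem_CliffordLevel_two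
    (s : QV n ≃ᵃ[ZMod 2] QV n) (q : QuadraticForm (ZMod 2) (QV n)) :
    monomialMatrix s.toEquiv (fun b => signChar (q b)) ∈ CliffordLevel n 2 := by
  refine mem_CliffordLevel_of_conj_XZGate
    (monomialMatrix_mem_unitaryGroup _ fun b => by rw [star_signChar, signChar_mul_self]) ?_
  intro u z
  rw [XZGate_eq_monomialMatrix, monomialMatrix_conj]
  have shift : s.toEquiv * Equiv.addRight u * s.toEquiv⁻¹ = Equiv.addRight (s.linear u) := by
    ext1 b
    change s (s.symm b + u) = b + s.linear u
    rw [add_comm, ← vadd_eq_add, s.map_vadd, s.apply_symm_apply, vadd_eq_add, add_comm]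
  -- `q (x + u) - q x` is affine in `x`: its linear part is the polar form against `u`.
  let φ : QV n →ᵃ[ZMod 2] ZMod 2 :=
    ((q.polarBilin u + dotProductEquiv (ZMod 2) (Fin n) z).toAffineMap +
      AffineMap.const (ZMod 2) (QV n) (q u)).comp s.symm.toAffineMap
  have phase (x : QV n) :
      signChar (q (Equiv.addRight u x)) * signChar (z ⬝ᵥ x) * star (signChar (q x)) =
        signChar (q.polarBilin u x + z ⬝ᵥ x + q u) := by
    rw [Equiv.coe_addRight, star_signChar, ← AddChar.map_add_eq_mul, ← AddChar.map_add_eq_mul,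
      QuadraticMap.polarBilin_apply_apply, QuadraticMap.polar, add_comm u x]
    congr 1
    linear_combination ZModModule.add_self (q x)
  rw [shift, funext fun b => phase (s.toEquiv⁻¹ b)]
  exact monomialMatrix_addRight_affine_mem_PauliGroup (s.linear u) φ

theorem permGate_mem_CliffordLevel_three (f : QV n ≃ QV n)
    (affine : ∀ u, ∃ s : QV n ≃ᵃ[ZMod 2] QV n, s.toEquiv = f * Equiv.addRight u * f⁻¹)
    (quadratic : ∀ z, ∃ q : QuadraticForm (ZMod 2) (QV n), ∀ b, q b = z ⬝ᵥ f.symm b) :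
    permGate n f ∈ CliffordLevel n 3 := by
  rw [permGate_eq_monomialMatrix]
  refine mem_CliffordLevel_of_conj_XZGate (monomialMatrix_mem_unitaryGroup _ fun b => by simp) ?_
  intro u z
  obtain ⟨s, hs⟩ := affine u
  obtain ⟨q, hq⟩ := quadratic z
  have phase (b : QV n) : (1 : QV n → ℂ) (Equiv.addRight u (f⁻¹ b)) * signChar (z ⬝ᵥ f⁻¹ b) *
      star ((1 : QV n → ℂ) (f⁻¹ b)) = signChar (q b) := by
    rw [Pi.one_apply, Pi.one_apply, one_mul, star_one, mul_one, hq]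
    rfl
  rw [XZGate_eq_monomialMatrix, monomialMatrix_conj, ← hs, funext phase]
  exact monomialMatrix_affineEquiv_quadraticForm_mem_CliffordLevel_two s q

end Gates

/-! ### The circle operation -/

section Circle

variable {A V : Type*} [NonUnitalCommRing A] [AddCommGroup V]

theorem map_mul_add_of_map_circle (hsq : ∀ x : A, x * x = 0) {ℓ : A → V}
    (hℓ : ∀ x y, ℓ (x + y + x * y) = ℓ x + ℓ y) (x y z : A) :
    ℓ (x * (y + z)) = ℓ (x * y) + ℓ (x * z) := by
  have product : x * y * (x * z) = 0 := by rw [mul_mul_mul_comm, hsq, zero_mul]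
  rw [mul_add, ← hℓ, product, add_zero]

variable [Module (ZMod 2) A]

theorem sum_mul_self_eq_zero {ι : Type*} (s : Finset ι) {x : ι → A} (hx : ∀ i, x i * x i = 0) :
    (∑ i ∈ s, x i) * ∑ i ∈ s, x i = 0 := by
  refine Finset.sum_induction x (fun y => y * y = 0) (fun y z hy hz => ?_) (mul_zero 0)
    fun i _ => hx i
  rw [add_mul, mul_add, mul_add, hy, hz, zero_add, add_zero, mul_comm z y, ZModModule.add_self]

-- With `x ∘ y = x + y + x * y`, one has `x + y = x ∘ (y + x * y)` and `y + x * y = y ∘ (x * y)`.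
theorem polar_of_map_circle (hsq : ∀ x : A, x * x = 0) {ℓ : A → V}
    (hℓ : ∀ x y, ℓ (x + y + x * y) = ℓ x + ℓ y) (x y : A) :
    QuadraticMap.polar ℓ x y = ℓ (x * y) := by
  have hxxy : x * (x * y) = 0 := by rw [← mul_assoc, hsq, zero_mul]
  have hyxy : y * (x * y) = 0 := by rw [mul_left_comm, hsq, mul_zero]
  have outer : x + (y + x * y) + x * (y + x * y) = x + y := by
    rw [mul_add, hxxy, add_zero, add_assoc, add_assoc, ZModModule.add_self, add_zero]
  have inner : y + x * y + y * (x * y) = y + x * y := by rw [hyxy, add_zero]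
  rw [QuadraticMap.polar, ← outer, hℓ, ← inner, hℓ]
  abel

variable [Module (ZMod 2) V]

/-- A homomorphism `ℓ` from the circle monoid (`x ∘ y = x + y + x * y`) of a commutative
`𝔽₂`-algebra with `x * x = 0` to an additive group, viewed as a quadratic map. Its polar form is
`(x, y) ↦ ℓ (x * y)`. -/
def quadraticMapOfCircle (hsq : ∀ x : A, x * x = 0) (ℓ : A → V)
    (hℓ : ∀ x y, ℓ (x + y + x * y) = ℓ x + ℓ y) : QuadraticMap (ZMod 2) A V :=
  have polar_add (x y z : A) : QuadraticMap.polar ℓ (x + y) z =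
      QuadraticMap.polar ℓ x z + QuadraticMap.polar ℓ y z := by
    simp only [polar_of_map_circle hsq hℓ, mul_comm _ z, map_mul_add_of_map_circle hsq hℓ]
  QuadraticMap.ofPolar ℓ
    (fun a x => by
      have hℓ0 : ℓ 0 = 0 := by simpa using hℓ 0 0
      obtain rfl | rfl : a = 0 ∨ a = 1 := by decide +revert
      · rw [zero_smul, mul_zero, zero_smul, hℓ0]
      · rw [one_smul, mul_one, one_smul])
    polar_add
    (fun a x y =>
      ZMod.map_smul (AddMonoidHom.mk' (QuadraticMap.polar ℓ · y) (polar_add · · y)) a x)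

/-- Multiplication by `p` in the circle monoid, viewed as an affine map. -/
def circleAffineEquiv [IsScalarTower (ZMod 2) A A] (hsq : ∀ x : A, x * x = 0) (p : A) :
    A ≃ᵃ[ZMod 2] A :=
  (LinearEquiv.ofInvolutive (LinearMap.id + LinearMap.mulRight (ZMod 2) p) fun x => by
    simp only [LinearMap.add_apply, LinearMap.id_apply, LinearMap.mulRight_apply, add_mul,
      mul_assoc, hsq, mul_zero, add_zero, add_assoc, ZModModule.add_self]).toAffineEquiv.trans
  (AffineEquiv.constVAdd (ZMod 2) A p)

end Circle

section Expansion

variable {ι R : Type*} [CommRing R]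

theorem prod_one_add_add_smul {B : Type*} [CommRing B] [Algebra R B] {s : Finset ι}
    {e : ι → B} (he : ∀ i ∈ s, e i * e i = 0) (u v : ι → R) :
    ∏ i ∈ s, (1 + (u i + v i) • e i) = (∏ i ∈ s, (1 + u i • e i)) * ∏ i ∈ s, (1 + v i • e i) := by
  rw [← Finset.prod_mul_distrib]
  refine Finset.prod_congr rfl fun i hi => ?_
  rw [add_mul, mul_add, mul_add, smul_mul_smul_comm, he i hi, smul_zero, add_smul]
  ring

theorem quadraticMap_sum_smul {M N : Type*} [AddCommGroup M] [Module R M] [AddCommGroup N]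
    [Module R N] [LinearOrder ι] (Q : QuadraticMap R M N) (s : Finset ι) (w : ι → R) (e : ι → M) :
    Q (∑ i ∈ s, w i • e i) = ∑ i ∈ s, (w i * w i) • Q (e i) +
      ∑ t ∈ s.offDiag with t.1 < t.2, (w t.1 * w t.2) • QuadraticMap.polar Q (e t.1) (e t.2) := by
  rw [QuadraticMap.map_sum, Finset.sum_sym2_filter_not_isDiag]
  simp only [QuadraticMap.map_smul, Sym2.map_mk, QuadraticMap.polarSym2_sym2Mk,
    QuadraticMap.polar_smul_left, QuadraticMap.polar_smul_right, smul_smul, mul_comm]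

end Expansion

/-! ### Descending multiplications -/

section Pi

variable {n : ℕ}

theorem stdBasis_eq_single (i : Fin n) : stdBasis n i = Pi.single i 1 := by
  ext m
  simp only [stdBasis, Pi.single_apply]

theorem sum_smul_stdBasis (v : QV n) : ∑ i, v i • stdBasis n i = v := by
  simpa only [stdBasis_eq_single] using (pi_eq_sum_univ' v).symm

/-- The map `π`, evaluated at `v` by taking `S` to be the support of `v`. -/
def dmPi (n : ℕ) (mul : QV n → QV n → QV n) (v : QV n) : QV n :=
  ∑ T ∈ ({i | v i ≠ 0} : Finset (Fin n)).powerset.erase ∅, dmProd n mul T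

theorem dmPiSpec_dmPi (mul : QV n → QV n → QV n) : dmPiSpec n mul (dmPi n mul) := by
  intro S
  have support : ({i | (∑ j ∈ S, stdBasis n j) i ≠ 0} : Finset (Fin n)) = S := by
    ext i
    simp [stdBasis]
  rw [dmPi, support]

end Pi

namespace IsDescendingMul

variable {n : ℕ} {mul : QV n → QV n → QV n}

protected theorem add_mul (h : IsDescendingMul n mul) (u v w : QV n) :
    mul (u + v) w = mul u w + mul v w :=
  h.1 u v w

protected theorem mul_add (h : IsDescendingMul n mul) (u v w : QV n) :
    mul u (v + w) = mul u v + mul u w :=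
  h.2.1 u v w

protected theorem mul_assoc (h : IsDescendingMul n mul) (u v w : QV n) :
    mul (mul u v) w = mul u (mul v w) :=
  h.2.2.1 u v w

protected theorem mul_comm (h : IsDescendingMul n mul) (u v : QV n) : mul u v = mul v u :=
  h.2.2.2.1 u v

theorem stdBasis_mul_self (h : IsDescendingMul n mul) (i : Fin n) :
    mul (stdBasis n i) (stdBasis n i) = 0 :=
  h.2.2.2.2.1 i

theorem stdBasis_mul_stdBasis_apply_eq_zero (h : IsDescendingMul n mul) {i j k : Fin n}
    (hk : k ≤ j) : mul (stdBasis n i) (stdBasis n j) k = 0 := by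
  have descending := h.2.2.2.2.2
  rcases lt_trichotomy i j with hij | rfl | hji
  · exact descending i j hij k hk
  · rw [h.stdBasis_mul_self, Pi.zero_apply]
  · rw [h.mul_comm]
    exact descending j i hji k (hk.trans hji.le)

/-- The commutative algebra `(𝔽₂ⁿ, mul)`. A type synonym, since `Fin n → ZMod 2` already carries the
coordinatewise product. -/
def Alg (_ : IsDescendingMul n mul) : Type := QV n

instance (h : IsDescendingMul n mul) : AddCommGroup h.Alg := inferInstanceAs (AddCommGroup (QV n))

instance (h : IsDescendingMul n mul) : Module (ZMod 2) h.Alg :=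
  inferInstanceAs (Module (ZMod 2) (QV n))

instance (h : IsDescendingMul n mul) : NonUnitalCommRing h.Alg where
  mul := mul
  left_distrib := h.mul_add
  right_distrib := h.add_mul
  zero_mul x := (AddMonoidHom.mk' (mul · x) (h.add_mul · · x)).map_zero
  mul_zero x := (AddMonoidHom.mk' (mul x) (h.mul_add x)).map_zero
  mul_assoc := h.mul_assoc
  mul_comm := h.mul_comm

instance (h : IsDescendingMul n mul) : IsScalarTower (ZMod 2) h.Alg h.Alg :=
  ⟨fun a x y => ZMod.map_smul (AddMonoidHom.mulRight y) a x⟩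

instance (h : IsDescendingMul n mul) : SMulCommClass (ZMod 2) h.Alg h.Alg :=
  ⟨fun a x y => (ZMod.map_smul (AddMonoidHom.mulLeft x) a y).symm⟩

/-- The identity map onto the algebra `(𝔽₂ⁿ, mul)`. -/
def toAlg (h : IsDescendingMul n mul) : QV n ≃ₗ[ZMod 2] h.Alg := LinearEquiv.refl _ _

theorem toAlg_mul (h : IsDescendingMul n mul) (x y : QV n) :
    h.toAlg (mul x y) = h.toAlg x * h.toAlg y :=
  rfl

theorem mul_self (h : IsDescendingMul n mul) (x : QV n) : mul x x = 0 := by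
  refine h.toAlg.injective ?_
  rw [toAlg_mul, ← sum_smul_stdBasis x, map_sum, map_zero]
  refine sum_mul_self_eq_zero _ fun i => ?_
  rw [map_smul, smul_mul_smul_comm, ← toAlg_mul, h.stdBasis_mul_self, map_zero, smul_zero]

/-- The inclusion of `(𝔽₂ⁿ, mul)` into its unitization. -/
def toUnitization (h : IsDescendingMul n mul) : QV n →ₗ[ZMod 2] Unitization (ZMod 2) h.Alg :=
  Unitization.inrHom (ZMod 2) (ZMod 2) h.Alg ∘ₗ h.toAlg

theorem toUnitization_injective (h : IsDescendingMul n mul) : Function.Injective h.toUnitization :=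
  Unitization.inr_injective.comp h.toAlg.injective

theorem toUnitization_mul (h : IsDescendingMul n mul) (x y : QV n) :
    h.toUnitization (mul x y) = h.toUnitization x * h.toUnitization y :=
  Unitization.inr_mul (ZMod 2) (h.toAlg x) (h.toAlg y)

theorem toUnitization_dmProdList (h : IsDescendingMul n mul) : ∀ {l : List (Fin n)}, l ≠ [] →
    h.toUnitization (dmProdList n mul l) =
      (l.map fun i => h.toUnitization (stdBasis n i)).prod
  | [i], _ => (List.prod_singleton ..).symm
  | i :: j :: l, _ => by
    rw [List.map_cons, List.prod_cons, ← toUnitization_dmProdList h (List.cons_ne_nil j l),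
      ← toUnitization_mul, dmProdList]

theorem toUnitization_dmProd (h : IsDescendingMul n mul) {T : Finset (Fin n)} (hT : T ≠ ∅) :
    h.toUnitization (dmProd n mul T) = ∏ i ∈ T, h.toUnitization (stdBasis n i) := by
  have sort_ne_nil : T.sort (· ≤ ·) ≠ [] := by
    rwa [Ne, ← List.toFinset_eq_empty_iff, Finset.sort_toFinset]
  rw [dmProd, h.toUnitization_dmProdList sort_ne_nil, ← Finset.prod_map_toList]
  exact ((T.sort_perm_toList (· ≤ ·)).map _).prod_eq

theorem one_add_toUnitization_dmPi (h : IsDescendingMul n mul) (v : QV n) :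
    1 + h.toUnitization (dmPi n mul v) = ∏ i, (1 + v i • h.toUnitization (stdBasis n i)) := by
  have factor (i : Fin n) : 1 + v i • h.toUnitization (stdBasis n i) =
      if v i ≠ 0 then 1 + h.toUnitization (stdBasis n i) else 1 := by
    split_ifs with hi
    · have hvi : v i = 1 := Fin.eq_one_of_ne_zero _ hi
      rw [hvi, one_smul]
    · rw [not_not.mp hi, zero_smul, add_zero]
  simp_rw [factor]
  rw [← Finset.prod_filter, Finset.prod_one_add, dmPi, map_sum,
    ← Finset.add_sum_erase _ _ (Finset.empty_mem_powerset _), Finset.prod_empty]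
  exact congrArg _ (Finset.sum_congr rfl fun T hT =>
    h.toUnitization_dmProd (Finset.ne_of_mem_erase hT))

theorem dmPi_smul_stdBasis (h : IsDescendingMul n mul) (a : ZMod 2) (i : Fin n) :
    dmPi n mul (a • stdBasis n i) = a • stdBasis n i := by
  refine h.toUnitization_injective (add_left_cancel (a := 1) ?_)
  rw [one_add_toUnitization_dmPi, Fintype.prod_eq_single i fun j hj => ?_]
  · simp [stdBasis]
  · simp [stdBasis, hj]

theorem dmPi_add (h : IsDescendingMul n mul) (u v : QV n) :
    dmPi n mul (u + v) = dmPi n mul u + dmPi n mul v + mul (dmPi n mul u) (dmPi n mul v) := by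
  have nilpotent (i : Fin n) :
      h.toUnitization (stdBasis n i) * h.toUnitization (stdBasis n i) = 0 := by
    rw [← toUnitization_mul, h.stdBasis_mul_self, map_zero]
  have product := prod_one_add_add_smul (s := Finset.univ) (fun i _ => nilpotent i) u v
  simp only [← Pi.add_apply, ← one_add_toUnitization_dmPi] at product
  refine h.toUnitization_injective ?_
  rw [map_add, map_add, toUnitization_mul]
  linear_combination product

theorem mul_apply_eq_zero (h : IsDescendingMul n mul) {v : QV n} {k : Fin n}
    (hv : ∀ i < k, v i = 0) (u : QV n) : mul u v k = 0 := by
  have expansion : mul u v = ∑ i, ∑ j, (u i * v j) • mul (stdBasis n i) (stdBasis n j) := by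
    refine h.toAlg.injective ?_
    conv_lhs => rw [toAlg_mul, ← sum_smul_stdBasis u, ← sum_smul_stdBasis v]
    simp only [map_sum, map_smul, Finset.sum_mul_sum, smul_mul_smul_comm, toAlg_mul]
  simp only [expansion, Finset.sum_apply, Pi.smul_apply]
  refine Finset.sum_eq_zero fun i _ => Finset.sum_eq_zero fun j _ => ?_
  rcases lt_or_ge j k with hj | hj
  · rw [hv j hj, mul_zero, zero_smul]
  · rw [h.stdBasis_mul_stdBasis_apply_eq_zero hj, smul_zero]

theorem dmPi_apply_of_forall_lt (h : IsDescendingMul n mul) {v : QV n} {k : Fin n}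
    (hv : ∀ i < k, v i = 0) : dmPi n mul v k = v k := by
  let P (w : QV n) : Prop := (∀ m < k, dmPi n mul w m = 0) ∧ dmPi n mul w k = w k
  have zero : P 0 := by simp [P, dmPi]
  have add (x y : QV n) (hx : P x) (hy : P y) : P (x + y) := by
    simp only [P, h.dmPi_add, Pi.add_apply]
    refine ⟨fun m hm => ?_, ?_⟩
    · rw [hx.1 m hm, hy.1 m hm, h.mul_apply_eq_zero fun i hi => hy.1 i (hi.trans hm), add_zero,
        add_zero]
    · rw [hx.2, hy.2, h.mul_apply_eq_zero hy.1, add_zero]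
  have basis (i : Fin n) : P (v i • stdBasis n i) := by
    refine ⟨fun m hm => ?_, by rw [h.dmPi_smul_stdBasis]⟩
    rw [h.dmPi_smul_stdBasis, Pi.smul_apply, stdBasis]
    split_ifs with hmi
    · rw [← hmi, hv m hm, zero_smul]
    · rw [smul_zero]
  have sum : P (∑ i, v i • stdBasis n i) :=
    Finset.sum_induction _ P add zero fun i _ => basis i
  rw [sum_smul_stdBasis] at sum
  exact sum.2

theorem apply_eq_zero_of_dmPi_apply_eq_zero (h : IsDescendingMul n mul) {v : QV n} {k : Fin n}
    (hv : ∀ i ≤ k, dmPi n mul v i = 0) : v k = 0 := by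
  induction k using WellFoundedLT.induction with
  | ind k ih =>
    rw [← h.dmPi_apply_of_forall_lt fun i hi => ih i hi fun m hm => hv m (hm.trans hi.le)]
    exact hv k le_rfl

theorem dmPi_injective (h : IsDescendingMul n mul) : Function.Injective (dmPi n mul) := by
  intro u v huv
  have kernel : dmPi n mul (u + v) = 0 := by
    rw [h.dmPi_add, huv, h.mul_self, ZModModule.add_self, add_zero]
  rw [← sub_eq_zero, ZModModule.sub_eq_add]
  exact funext fun k => h.apply_eq_zero_of_dmPi_apply_eq_zero fun i _ => congrFun kernel i

/-- The map `π` as a permutation of `𝔽₂ⁿ`. -/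
noncomputable def dmPiEquiv (h : IsDescendingMul n mul) : QV n ≃ QV n :=
  Equiv.ofBijective (dmPi n mul) (Finite.injective_iff_bijective.mp h.dmPi_injective)

theorem dmPiEquiv_add (h : IsDescendingMul n mul) (u v : QV n) :
    h.dmPiEquiv (u + v) = h.dmPiEquiv u + h.dmPiEquiv v + mul (h.dmPiEquiv u) (h.dmPiEquiv v) :=
  h.dmPi_add u v

theorem dmPiEquiv_symm_apply_eq_zero (h : IsDescendingMul n mul) {w : QV n} {k : Fin n}
    (hw : ∀ i ≤ k, w i = 0) : h.dmPiEquiv.symm w k = 0 := by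
  refine h.apply_eq_zero_of_dmPi_apply_eq_zero fun i hi => ?_
  exact (congrFun (h.dmPiEquiv.apply_symm_apply w) i).trans (hw i hi)

theorem dmPiEquiv_symm_circle (h : IsDescendingMul n mul) (x y : QV n) :
    h.dmPiEquiv.symm (x + y + mul x y) = h.dmPiEquiv.symm x + h.dmPiEquiv.symm y := by
  rw [Equiv.symm_apply_eq, dmPiEquiv_add, Equiv.apply_symm_apply, Equiv.apply_symm_apply]

/-- The inverse of `π`, viewed as a quadratic map; the logarithm of the circle group of
`(𝔽₂ⁿ, mul)`. -/
noncomputable def log (h : IsDescendingMul n mul) : QuadraticMap (ZMod 2) (QV n) (QV n) :=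
  (quadraticMapOfCircle (fun x => h.mul_self (h.toAlg.symm x)) (h.dmPiEquiv.symm ∘ h.toAlg.symm)
    fun x y => h.dmPiEquiv_symm_circle (h.toAlg.symm x) (h.toAlg.symm y)).comp h.toAlg.toLinearMap

theorem log_apply (h : IsDescendingMul n mul) (w : QV n) : h.log w = h.dmPiEquiv.symm w :=
  rfl

theorem polar_log (h : IsDescendingMul n mul) (x y : QV n) :
    QuadraticMap.polar h.log x y = h.log (mul x y) :=
  polar_of_map_circle (A := h.Alg) (ℓ := h.dmPiEquiv.symm) h.mul_self h.dmPiEquiv_symm_circle x y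

theorem log_stdBasis (h : IsDescendingMul n mul) (i : Fin n) :
    h.log (stdBasis n i) = stdBasis n i := by
  rw [log_apply, Equiv.symm_apply_eq, ← one_smul (ZMod 2) (stdBasis n i)]
  exact (h.dmPi_smul_stdBasis 1 i).symm

theorem log_apply_eq_sum (h : IsDescendingMul n mul) (w : QV n) (k : Fin n) :
    h.log w k = w k + ∑ t : Fin n × Fin n with t.1 < t.2,
      w t.1 * w t.2 * h.log (mul (stdBasis n t.1) (stdBasis n t.2)) k := by
  have pairs : Finset.univ.offDiag.filter (fun t : Fin n × Fin n => t.1 < t.2) =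
      Finset.univ.filter fun t => t.1 < t.2 := by
    ext t
    simpa using ne_of_lt
  have squares : ∑ i, (w i * w i) • h.log (stdBasis n i) = w := by
    conv_rhs => rw [← sum_smul_stdBasis w]
    refine Finset.sum_congr rfl fun i _ => ?_
    rw [log_stdBasis, ← pow_two, ZMod.pow_card]
  conv_lhs => rw [← sum_smul_stdBasis w, quadraticMap_sum_smul, squares, pairs]
  simp only [polar_log, Pi.add_apply, Finset.sum_apply, Pi.smul_apply, smul_eq_mul]

theorem exists_affineEquiv_eq_conj_addRight (h : IsDescendingMul n mul) (u : QV n) :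
    ∃ s : QV n ≃ᵃ[ZMod 2] QV n,
      s.toEquiv = h.dmPiEquiv * Equiv.addRight u * h.dmPiEquiv⁻¹ := by
  let s := circleAffineEquiv (fun x => h.mul_self (h.toAlg.symm x)) (h.toAlg (h.dmPiEquiv u))
  refine ⟨(h.toAlg.toAffineEquiv.trans s).trans h.toAlg.symm.toAffineEquiv, ?_⟩
  ext1 b
  obtain ⟨v, rfl⟩ := h.dmPiEquiv.surjective b
  have translate : h.dmPiEquiv (v + u) =
      h.dmPiEquiv u + (h.dmPiEquiv v + mul (h.dmPiEquiv v) (h.dmPiEquiv u)) := by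
    rw [dmPiEquiv_add]
    abel
  change _ = h.dmPiEquiv (h.dmPiEquiv.symm (h.dmPiEquiv v) + u)
  rw [Equiv.symm_apply_apply, translate]
  rfl

theorem permGate_dmPiEquiv_mem_CliffordLevel_three (h : IsDescendingMul n mul) :
    permGate n h.dmPiEquiv ∈ CliffordLevel n 3 :=
  permGate_mem_CliffordLevel_three _ h.exists_affineEquiv_eq_conj_addRight fun z =>
    ⟨(dotProductEquiv (ZMod 2) (Fin n) z).compQuadraticMap h.log, fun _ => rfl⟩

end IsDescendingMul

/-! ### Staircase form -/

section Staircase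

variable {n : ℕ}

theorem tofFun_apply (i j k : Fin n) (v : QV n) (m : Fin n) :
    tofFun n i j k v m = v m + if k = m then v i * v j else 0 := by
  unfold tofFun
  split_ifs <;> simp_all

theorem foldl_tofFun_apply_of_lt {L : List (Fin n × Fin n × Fin n)} {v : QV n} {m : Fin n}
    (hm : ∀ t ∈ L, m < t.2.2) : L.foldl (fun w t => tofFun n t.1 t.2.1 t.2.2 w) v m = v m := by
  induction L generalizing v with
  | nil => rfl
  | cons t L ih =>
    rw [List.forall_mem_cons] at hm
    rw [List.foldl_cons, ih hm.2, tofFun_apply, if_neg hm.1.ne', add_zero]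

-- The controls of each gate lie below its target, so they already carry their final values.
theorem foldl_tofFun_apply {L : List (Fin n × Fin n × Fin n)}
    (hL : ∀ t ∈ L, t.1 < t.2.1 ∧ t.2.1 < t.2.2) (sorted : L.Pairwise fun s t => s.2.2 ≤ t.2.2)
    (v : QV n) (k : Fin n) :
    let r := L.foldl (fun w t => tofFun n t.1 t.2.1 t.2.2 w) v
    r k = v k + (L.map fun t => if t.2.2 = k then r t.1 * r t.2.1 else 0).sum := by
  intro r
  induction L generalizing v with
  | nil => simp [r]
  | cons t L ih =>
    rw [List.forall_mem_cons] at hL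
    rw [List.pairwise_cons] at sorted
    have control {m : Fin n} (hm : m < t.2.2) : r m = v m :=
      foldl_tofFun_apply_of_lt fun s hs => by
        rcases List.mem_cons.mp hs with rfl | hs
        exacts [hm, hm.trans_le (sorted.1 s hs)]
    rw [List.map_cons, List.sum_cons, control hL.1.2, control (hL.1.1.trans hL.1.2), ← add_assoc,
      ← tofFun_apply]
    exact ih hL.2 sorted.2 _

theorem isStaircase_of_apply_eq_add_sum {g : QV n → QV n} (Q : Finset (Fin n × Fin n × Fin n))
    (hQ : ∀ t ∈ Q, t.1 < t.2.1 ∧ t.2.1 < t.2.2)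
    (hg : ∀ v k, g v k = v k + ∑ t ∈ Q, if t.2.2 = k then g v t.1 * g v t.2.1 else 0) :
    IsStaircase n g := by
  let L := Q.toList.mergeSort fun s t => decide (s.2.2 ≤ t.2.2)
  have perm : L.Perm Q.toList := List.mergeSort_perm ..
  have mem {t} (ht : t ∈ L) : t ∈ Q := Finset.mem_toList.mp (perm.mem_iff.mp ht)
  have sorted : L.Pairwise fun s t => s.2.2 ≤ t.2.2 := by
    simpa using List.pairwise_mergeSort (le := fun s t : Fin n × Fin n × Fin n =>
      decide (s.2.2 ≤ t.2.2)) (by simpa using fun _ _ _ _ _ _ _ _ _ => le_trans)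
      (by simpa using fun _ _ _ _ _ _ => le_total _ _) Q.toList
  refine ⟨L, perm.nodup_iff.mpr Q.nodup_toList, fun t ht => hQ t (mem ht), sorted.isChain,
    funext fun v => funext fun k => ?_⟩
  induction k using WellFoundedLT.induction with
  | ind k ih =>
    rw [foldl_tofFun_apply (fun t ht => hQ t (mem ht)) sorted, hg, ← Finset.sum_map_toList,
      ← (perm.map _).sum_eq]
    refine congrArg (v k + List.sum ·) (List.map_congr_left fun t ht => ?_)
    split_ifs with hk
    · obtain ⟨hij, hjk⟩ := hQ t (mem ht)
      rw [ih _ (hk ▸ hij.trans hjk), ih _ (hk ▸ hjk)]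
    · rfl

end Staircase

namespace IsDescendingMul

variable {n : ℕ} {mul : QV n → QV n → QV n}

theorem log_stdBasis_mul_stdBasis_apply_eq_zero (h : IsDescendingMul n mul) {i j k : Fin n}
    (hk : k ≤ j) : h.log (mul (stdBasis n i) (stdBasis n j)) k = 0 :=
  h.dmPiEquiv_symm_apply_eq_zero fun _ hm => h.stdBasis_mul_stdBasis_apply_eq_zero (hm.trans hk)

theorem dmPiEquiv_apply_eq_add_sum (h : IsDescendingMul n mul) (v : QV n) (k : Fin n) :
    h.dmPiEquiv v k = v k + ∑ t : Fin n × Fin n with t.1 < t.2,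
      h.dmPiEquiv v t.1 * h.dmPiEquiv v t.2 *
        h.log (mul (stdBasis n t.1) (stdBasis n t.2)) k := by
  rw [← ZModModule.sub_eq_add, eq_sub_iff_add_eq, ← log_apply_eq_sum, log_apply,
    Equiv.symm_apply_apply]

theorem isStaircase_dmPiEquiv (h : IsDescendingMul n mul) : IsStaircase n h.dmPiEquiv := by
  let c (i j k : Fin n) : ZMod 2 := h.log (mul (stdBasis n i) (stdBasis n j)) k
  refine isStaircase_of_apply_eq_add_sum
    (Finset.univ.filter fun t => t.1 < t.2.1 ∧ c t.1 t.2.1 t.2.2 = 1) (fun t ht => ?_)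
    fun v k => ?_
  · obtain ⟨hij, hc⟩ := (Finset.mem_filter_univ t).mp ht
    exact ⟨hij, lt_of_not_ge fun hk =>
      one_ne_zero (hc.symm.trans (h.log_stdBasis_mul_stdBasis_apply_eq_zero hk))⟩
  · have coefficient (i j : Fin n) (x : ZMod 2) :
        ∑ m, (if c i j m = 1 then if m = k then x else 0 else 0) = x * c i j k := by
      rw [Fintype.sum_eq_single k fun m hm => by rw [if_neg hm, ite_self], if_pos rfl]
      generalize c i j k = a
      decide +revert
    simp only [dmPiEquiv_apply_eq_add_sum h v k, Finset.sum_filter, Fintype.sum_prod_type, ite_and,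
      Finset.sum_ite_irrel, Finset.sum_const_zero, coefficient, c]

end IsDescendingMul

/-- For any descending multiplication on `𝔽₂ⁿ`, the map
`π(∑_{i∈S} eᵢ) = ∑_{∅≠T⊆S} ∏_{i∈T} eᵢ` is a bijection of `𝔽₂ⁿ`, and the
corresponding permutation gate is in staircase form and lies in `𝒞₃`. -/
theorem stmt1 (n : ℕ) (hn : 1 ≤ n) (mul : QV n → QV n → QV n)
    (hmul : IsDescendingMul n mul) :
    ∃ f : QV n ≃ QV n,
      dmPiSpec n mul ⇑f ∧
      IsStaircase n ⇑f ∧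
      permGate n f ∈ CliffordLevel n 3 :=
  ⟨hmul.dmPiEquiv, dmPiSpec_dmPi mul, hmul.isStaircase_dmPiEquiv,
    hmul.permGate_dmPiEquiv_mem_CliffordLevel_three⟩
end
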